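/- arXiv:math/0012158 — 2 statements merged into one kernel-verified Lean document; each statement's English description precedes it below -/
import Mathlib

section
/- Let k be a field of characteristic zero and α a k-automorphism of K₁ = k((t₁)) with α(t₁) = ζt₁ + higher order terms, ζ a primitive n-th root of unity. Then α is conjugate in Aut_k(K₁) to an automorphism β with β(t₁) = ζ t₁ + x t₁^{i} + x²y t₁^{2i−1} for some x, y ∈ k, where i = i_α := v(αⁿ(t₁) − t₁) if αⁿ ≠ id (and if ζ is not a root of unity, to β(t₁) = ζt₁). -/
open PowerSeries

section
variable {k : Type*} [Field k]

theorem exists_eq_zero_of_successive_approximation {E : k⟦X⟧ → k⟦X⟧} {r d₀ : ℕ} {g₀ : k⟦X⟧}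
    (hE : ∀ (N : ℕ) (g g' : k⟦X⟧), X ^ N ∣ g' - g → X ^ N ∣ E g' - E g)
    (h₀ : X ^ (d₀ + r) ∣ E g₀)
    (step : ∀ d ≥ d₀, ∀ g, X ^ d₀ ∣ g - g₀ → X ^ (d + r) ∣ E g →
      ∃ g', X ^ d ∣ g' - g ∧ X ^ (d + r + 1) ∣ E g') :
    ∃ g, X ^ d₀ ∣ g - g₀ ∧ E g = 0 := by
  have next : ∀ (m : ℕ) (g : {g : k⟦X⟧ // X ^ d₀ ∣ g - g₀ ∧ X ^ (d₀ + m + r) ∣ E g}),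
      ∃ g' : {g : k⟦X⟧ // X ^ d₀ ∣ g - g₀ ∧ X ^ (d₀ + (m + 1) + r) ∣ E g},
        X ^ (d₀ + m) ∣ g'.1 - g.1 := by
    rintro m ⟨g, hg, hEg⟩
    obtain ⟨g', h1, h2⟩ := step (d₀ + m) (by omega) g hg hEg
    refine ⟨⟨g', ?_, ?_⟩, h1⟩
    · have := dvd_add ((pow_dvd_pow X (by omega : d₀ ≤ d₀ + m)).trans h1) hg
      simpa using this
    · convert h2 using 2; omega
  choose nx hnx using next
  let u : ∀ m : ℕ, {g : k⟦X⟧ // X ^ d₀ ∣ g - g₀ ∧ X ^ (d₀ + m + r) ∣ E g} :=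
    fun m => Nat.rec ⟨g₀, by simp, by simpa using h₀⟩ (fun m g => nx m g) m
  have hu : ∀ m, X ^ (d₀ + m) ∣ (u (m + 1)).1 - (u m).1 := fun m => hnx m (u m)
  have hu' : ∀ m l, X ^ (d₀ + m) ∣ (u (m + l)).1 - (u m).1 := by
    intro m l
    induction l with
    | zero => simp
    | succ l ih =>
      have := dvd_add ((pow_dvd_pow X (by omega : d₀ + m ≤ d₀ + (m + l))).trans (hu (m + l))) ih
      rwa [sub_add_sub_cancel] at this
  let g : k⟦X⟧ := PowerSeries.mk fun j => coeff j (u (j + 1)).1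
  have hg : ∀ m, X ^ (d₀ + m) ∣ g - (u m).1 := by
    intro m
    rw [X_pow_dvd_iff]
    intro j hj
    simp only [g, map_sub, coeff_mk]
    rcases le_total m (j + 1) with h | h
    · obtain ⟨l, hl⟩ := Nat.exists_eq_add_of_le h
      have := X_pow_dvd_iff.1 (hu' m l) j hj
      rw [hl]
      simpa using this
    · obtain ⟨l, hl⟩ := Nat.exists_eq_add_of_le h
      have := X_pow_dvd_iff.1 (hu' (j + 1) l) j (by omega)
      rw [hl]
      rw [map_sub] at this
      linear_combination -this
  refine ⟨g, by simpa [u] using hg 0, ?_⟩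
  ext j
  have h1 := hE _ _ _ (hg (j + 1))
  have h2 : X ^ (d₀ + (j + 1)) ∣ E g := by
    have := dvd_add h1 ((pow_dvd_pow X (by omega)).trans (u (j + 1)).2.2)
    simpa using this
  simpa using X_pow_dvd_iff.1 h2 j (by omega)

theorem exists_C_mul_sub_dvd {N : ℕ} {z : k⟦X⟧} (hz : X ^ N ∣ z) :
    ∃ e : k, X ^ (N + 1) ∣ z - C e * X ^ N := by
  obtain ⟨h, rfl⟩ := hz
  refine ⟨constantCoeff h, ?_⟩
  have : X ∣ h - C (constantCoeff h) := by simp [X_dvd_iff]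
  obtain ⟨q, hq⟩ := this
  exact ⟨q, by linear_combination X ^ N * hq⟩

theorem eq_zero_of_X_pow_succ_dvd {N : ℕ} {e : k} (h : X ^ (N + 1) ∣ (C e * X ^ N : k⟦X⟧)) :
    e = 0 := by
  simpa using X_pow_dvd_iff.1 h N (by omega)

theorem exists_sq_eq_one_add [CharZero k] {f : k⟦X⟧} (hf : X ∣ f) :
    ∃ h : k⟦X⟧, h ^ 2 = 1 + f := by
  suffices H : ∃ h : k⟦X⟧, X ^ 1 ∣ h - 1 ∧ h ^ 2 - (1 + f) = 0 by
    obtain ⟨h, -, hh⟩ := H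
    exact ⟨h, by linear_combination hh⟩
  refine exists_eq_zero_of_successive_approximation
    (E := fun h : k⟦X⟧ => h ^ 2 - (1 + f)) (r := 0) ?_ ?_ ?_
  · rintro N g g' h
    exact h.trans ⟨g' + g, by ring⟩
  · simpa using hf
  · rintro d hd g ⟨p, hp⟩ hg
    obtain ⟨e, q, hq⟩ := exists_C_mul_sub_dvd hg
    have h2 : C (e / 2) * 2 = (C e : k⟦X⟧) := by
      rw [← map_ofNat C 2, ← map_mul, div_mul_cancel₀ _ two_ne_zero]
    refine ⟨g - C (e / 2) * X ^ d, ⟨-C (e / 2), by ring⟩, ?_⟩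
    obtain ⟨l, rfl⟩ := Nat.exists_eq_add_of_le hd
    refine ⟨q - C e * p + C (e / 2) ^ 2 * X ^ l, ?_⟩
    linear_combination hq - X ^ (1 + l) * C e * hp - g * X ^ (1 + l) * h2

theorem algHom_C (A : k⟦X⟧ →ₐ[k] k⟦X⟧) (c : k) : A (C c) = C c := A.commutes c

theorem X_pow_dvd_map {A : k⟦X⟧ →ₐ[k] k⟦X⟧} (hA : X ∣ A X) {N : ℕ} {h : k⟦X⟧}
    (hh : X ^ N ∣ h) : X ^ N ∣ A h := by
  obtain ⟨q, rfl⟩ := hh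
  rw [map_mul, map_pow]
  exact (pow_dvd_pow_of_dvd hA N).mul_right _

theorem exists_eq_C_add_X_mul (h : k⟦X⟧) : ∃ (c : k) (h' : k⟦X⟧), h = C c + X * h' := by
  have : X ∣ h - C (constantCoeff h) := by simp [X_dvd_iff]
  obtain ⟨q, hq⟩ := this
  exact ⟨_, q, by linear_combination hq⟩

theorem X_pow_dvd_map_sub {B : k⟦X⟧ →ₐ[k] k⟦X⟧} {i : ℕ} (hi : i ≠ 0) (hB : X ^ i ∣ B X - X)
    (h : k⟦X⟧) : X ^ i ∣ B h - h := by
  have hX : X ∣ B X := by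
    have := dvd_add ((dvd_pow_self X hi).trans hB) (dvd_refl X)
    simpa using this
  have key : ∀ j ≤ i, ∀ h : k⟦X⟧, X ^ j ∣ B h - h := by
    intro j
    induction j with
    | zero => simp
    | succ j ih =>
      intro hj h
      obtain ⟨c, h', rfl⟩ := exists_eq_C_add_X_mul h
      have h1 : X ^ (j + 1) ∣ B X * (B h' - h') := by
        rw [pow_succ']; exact mul_dvd_mul hX (ih (by omega) h')
      have h2 : X ^ (j + 1) ∣ (B X - X) * h' := ((pow_dvd_pow X hj).trans hB).mul_right _
      have := dvd_add h1 h2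
      rw [map_add, map_mul, algHom_C]
      convert this using 1; ring
  exact key i le_rfl h

theorem X_pow_succ_dvd_map_sub {B : k⟦X⟧ →ₐ[k] k⟦X⟧} {i : ℕ} (hi : i ≠ 0)
    (hB : X ^ i ∣ B X - X) {h : k⟦X⟧} (hh : X ^ 2 ∣ h) : X ^ (i + 1) ∣ B h - h := by
  obtain ⟨q, rfl⟩ := hh
  have hX : X ∣ B X := by
    have := dvd_add ((dvd_pow_self X hi).trans hB) (dvd_refl X)
    simpa using this
  have h1 : X ^ (i + 1) ∣ B X * B X * (B q - q) := by
    rw [pow_succ']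
    exact mul_dvd_mul (hX.mul_right _) (X_pow_dvd_map_sub hi hB q)
  have h2 : X ^ (i + 1) ∣ (B X - X) * (B X + X) * q := by
    rw [pow_succ]
    exact (mul_dvd_mul hB (dvd_add hX dvd_rfl)).mul_right _
  have := dvd_add h1 h2
  rw [map_mul, map_pow]
  convert this using 1; ring

theorem X_pow_succ_dvd_map_X_pow_sub {A : k⟦X⟧ →ₐ[k] k⟦X⟧} {ζ : k} (hA : X ^ 2 ∣ A X - C ζ * X)
    (N : ℕ) : X ^ (N + 1) ∣ A X ^ N - C ζ ^ N * X ^ N := by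
  obtain ⟨p, hp⟩ := hA
  have hp' : A X = X * (C ζ + X * p) := by linear_combination hp
  have : X ∣ (C ζ + X * p) ^ N - C ζ ^ N :=
    dvd_trans ⟨p, by ring⟩ (sub_dvd_pow_sub_pow _ _ N)
  obtain ⟨q, hq⟩ := this
  refine ⟨q, ?_⟩
  rw [hp', mul_pow]
  linear_combination X ^ N * hq

theorem X_pow_dvd_iterate_sub {A : k⟦X⟧ →ₐ[k] k⟦X⟧} {ζ : k} (hA : X ^ 2 ∣ A X - C ζ * X)
    {N : ℕ} {e : k} (he : e * ζ ^ N = e * ζ) {g : k⟦X⟧}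
    (hg : X ^ (N + 1) ∣ A g - C ζ * g - C e * X ^ N) (j : ℕ) :
    X ^ (N + 1) ∣ C ζ * (A ^ j) g - C ζ ^ (j + 1) * g - (j : k⟦X⟧) * C ζ ^ j * C e * X ^ N := by
  have hX : X ∣ A X := by
    obtain ⟨p, hp⟩ := hA
    exact ⟨C ζ + X * p, by linear_combination hp⟩
  have he' : X ^ (N + 1) ∣ C e * A X ^ N - C e * C ζ * X ^ N := by
    have he2 : (C e * C ζ ^ N : k⟦X⟧) = C e * C ζ := by
      simp only [← map_pow, ← map_mul, he]
    convert (X_pow_succ_dvd_map_X_pow_sub hA N).mul_left (C e) using 1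
    linear_combination X ^ N * he2
  induction j with
  | zero => simp
  | succ j ih =>
    have h1 := X_pow_dvd_map hX ih
    simp only [map_sub, map_mul, map_pow, algHom_C, map_natCast] at h1
    have h2 := dvd_add (dvd_add h1 (hg.mul_left (C ζ ^ (j + 1)))) (he'.mul_left ((j : k⟦X⟧) * C ζ ^ j))
    rw [show (A ^ (j + 1)) g = A ((A ^ j) g) by rw [pow_succ' A, AlgHom.mul_apply]]
    convert h2 using 1
    push_cast
    ring

theorem X_pow_dvd_pow_primitive_sub {A : k⟦X⟧ →ₐ[k] k⟦X⟧} {ζ : k} {n : ℕ} (hζ : ζ ^ n = 1)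
    (hA : X ^ 2 ∣ A X - C ζ * X) {N : ℕ} {e : k} (he : e * ζ ^ N = e * ζ) {g : k⟦X⟧}
    (hg : X ^ (N + 1) ∣ A g - C ζ * g - C e * X ^ N) :
    X ^ (N + 1) ∣ C ζ * ((A ^ n) g - g) - C (n * e) * X ^ N := by
  have h1 : (C ζ ^ n : k⟦X⟧) = 1 := by rw [← map_pow, hζ, map_one]
  convert X_pow_dvd_iterate_sub hA he hg n using 1
  rw [pow_succ, h1, map_mul, map_natCast]
  ring

theorem exists_dvd_map_sub_of_pow_ne {A : k⟦X⟧ →ₐ[k] k⟦X⟧} {ζ : k}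
    (hA : X ^ 2 ∣ A X - C ζ * X) {N : ℕ} (hN : ζ ^ N ≠ ζ) {g : k⟦X⟧}
    (hg : X ^ N ∣ A g - C ζ * g) :
    ∃ g', X ^ N ∣ g' - g ∧ X ^ (N + 1) ∣ A g' - C ζ * g' := by
  obtain ⟨e, he⟩ := exists_C_mul_sub_dvd hg
  have hc : C (e / (ζ - ζ ^ N)) * (C ζ - C ζ ^ N) = (C e : k⟦X⟧) := by
    rw [← map_pow, ← map_sub, ← map_mul, div_mul_cancel₀ _ (sub_ne_zero.2 hN.symm)]
  set c := e / (ζ - ζ ^ N)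
  refine ⟨g + C c * X ^ N, ⟨C c, by ring⟩, ?_⟩
  convert dvd_add he ((X_pow_succ_dvd_map_X_pow_sub hA N).mul_left (C c)) using 1
  simp only [map_add, map_mul, algHom_C, map_pow]
  linear_combination -X ^ N * hc

theorem exists_leading_term [CharZero k] {A : k⟦X⟧ →ₐ[k] k⟦X⟧} {ζ : k} {n i : ℕ} (hn : n ≠ 0)
    (hζ : ζ ^ n = 1) (hA : X ^ 2 ∣ A X - C ζ * X) (hi : i ≠ 0)
    (h1 : X ^ i ∣ (A ^ n) X - X) (h2 : ¬ X ^ (i + 1) ∣ (A ^ n) X - X) :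
    2 ≤ i ∧ ζ ^ i = ζ ∧ ∃ (s : k⟦X⟧) (x : k), x ≠ 0 ∧ X ^ 2 ∣ s - X ∧
      X ^ (i + 1) ∣ A s - C ζ * s - C x * X ^ i := by
  have hζ0 : ζ ≠ 0 := by
    rintro rfl
    simp [hn] at hζ
  have cancel : ∀ {N : ℕ} {z : k⟦X⟧}, X ^ N ∣ C ζ * z → X ^ N ∣ z := by
    intro N z h
    have := h.mul_left (C ζ⁻¹)
    rwa [← mul_assoc, ← map_mul, inv_mul_cancel₀ hζ0, map_one, one_mul] at this
  have hord : ∀ {N : ℕ} {g : k⟦X⟧}, X ^ (N + 1) ∣ A g - C ζ * g → X ^ (N + 1) ∣ (A ^ n) g - g := by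
    intro N g hg
    have := X_pow_dvd_pow_primitive_sub (N := N) (e := 0) hζ hA (by simp) (g := g) (by simpa using hg)
    exact cancel (by simpa using this)
  have inv : ∀ {g : k⟦X⟧}, X ^ 2 ∣ g - X → X ^ (i + 1) ∣ ((A ^ n) g - g) - ((A ^ n) X - X) := by
    intro g hg
    convert X_pow_succ_dvd_map_sub hi h1 hg using 1
    rw [map_sub]; ring
  have hnot : ∀ {g : k⟦X⟧}, X ^ 2 ∣ g - X → ¬ X ^ (i + 1) ∣ A g - C ζ * g := by
    intro g hg h
    have := dvd_sub (hord h) (inv hg)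
    rw [sub_sub_cancel] at this
    exact h2 this
  have hi2 : 2 ≤ i := by
    by_contra hlt
    obtain rfl : i = 1 := by omega
    exact hnot (g := X) (by simp) hA
  have key : ∀ N, 2 ≤ N → N ≤ i → ∃ g, X ^ 2 ∣ g - X ∧ X ^ N ∣ A g - C ζ * g := by
    intro N hN
    induction N, hN using Nat.le_induction with
    | base => exact fun _ => ⟨X, by simp, hA⟩
    | succ N hN ih =>
      intro hle
      obtain ⟨g, hg, hAg⟩ := ih (by omega)
      by_cases hres : ζ ^ N = ζ
      · obtain ⟨e, he⟩ := exists_C_mul_sub_dvd hAg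
        have h3 := X_pow_dvd_pow_primitive_sub hζ hA (by rw [hres]) he
        have h4 : X ^ (N + 1) ∣ (A ^ n) g - g :=
          (pow_dvd_pow X hle).trans (X_pow_dvd_map_sub hi h1 g)
        have h5 := dvd_sub (h4.mul_left (C ζ)) h3
        rw [sub_sub_cancel] at h5
        have h6 : e = 0 := by simpa [hn] using eq_zero_of_X_pow_succ_dvd h5
        exact ⟨g, hg, by simpa [h6] using he⟩
      · obtain ⟨g', hg', hAg'⟩ := exists_dvd_map_sub_of_pow_ne hA hres hAg
        refine ⟨g', ?_, hAg'⟩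
        have := dvd_add ((pow_dvd_pow X hN).trans hg') hg
        rwa [sub_add_sub_cancel] at this
  obtain ⟨s, hs, hAs⟩ := key i hi2 le_rfl
  have hres : ζ ^ i = ζ := by
    by_contra hres
    obtain ⟨g', hg', hAg'⟩ := exists_dvd_map_sub_of_pow_ne hA hres hAs
    have := dvd_add ((pow_dvd_pow X hi2).trans hg') hs
    rw [sub_add_sub_cancel] at this
    exact hnot this hAg'
  obtain ⟨x, hx⟩ := exists_C_mul_sub_dvd hAs
  refine ⟨hi2, hres, s, x, ?_, hs, hx⟩
  rintro rfl
  exact hnot hs (by simpa using hx)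

theorem pow_succ_dvd_perturbed_pow_sub {R : Type*} [CommRing R] {s g : R} (hg : s ^ 2 ∣ g - s)
    {d : ℕ} (hd : 2 ≤ d) (c : R) (m : ℕ) :
    s ^ (d + m + 1) ∣ (g + c * s ^ d) ^ (m + 1) - g ^ (m + 1) - (m + 1) * c * s ^ (d + m) := by
  obtain ⟨p, hp⟩ := hg
  obtain ⟨l, rfl⟩ := Nat.exists_eq_add_of_le' hd
  have h1 : g = s * (1 + s * p) := by linear_combination hp
  obtain ⟨t, ht⟩ : s ∣ (1 + s * p) ^ m - 1 := by
    simpa using dvd_trans ⟨p, by ring⟩ (sub_dvd_pow_sub_pow (1 + s * p) 1 m)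
  obtain ⟨K, hK⟩ := Polynomial.powAddExpansion (1 + s * p) (c * s ^ (l + 1)) (m + 1)
  have h2 : g + c * s ^ (l + 2) = s * (1 + s * p + c * s ^ (l + 1)) := by rw [h1]; ring
  refine ⟨(m + 1) * t * c + K * c ^ 2 * s ^ l, ?_⟩
  rw [h2, h1, mul_pow, mul_pow, hK]
  simp only [Nat.add_sub_cancel]
  push_cast
  linear_combination s ^ (m + 1) * (m + 1) * c * s ^ (l + 1) * ht

theorem pow_succ_dvd_pow_sub_leading {R : Type*} [CommRing R] {s a z x : R} {r : ℕ} (hr : 1 ≤ r)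
    (ha : s ^ (r + 2) ∣ a - z * s - x * s ^ (r + 1)) (m : ℕ) :
    s ^ (m + 1 + r + 1) ∣
      a ^ (m + 1) - z ^ (m + 1) * s ^ (m + 1) - (m + 1) * z ^ m * x * s ^ (m + 1 + r) := by
  obtain ⟨q, hq⟩ := ha
  obtain ⟨l, rfl⟩ := Nat.exists_eq_add_of_le' hr
  have h1 : a = s * (z + s ^ (l + 1) * (x + s * q)) := by linear_combination hq
  obtain ⟨K, hK⟩ := Polynomial.powAddExpansion z (s ^ (l + 1) * (x + s * q)) (m + 1)
  refine ⟨(m + 1) * z ^ m * q + K * (x + s * q) ^ 2 * s ^ l, ?_⟩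
  rw [h1, mul_pow, hK]
  simp only [Nat.add_sub_cancel]
  push_cast
  ring

theorem pow_dvd_iff_X_pow_dvd {s : k⟦X⟧} (hs : X ^ 2 ∣ s - X) (N : ℕ) {z : k⟦X⟧} :
    s ^ N ∣ z ↔ X ^ N ∣ z := by
  obtain ⟨p, hp⟩ := hs
  have hu : IsUnit (1 + X * p) := by simp [isUnit_iff_constantCoeff]
  have : Associated X s := ⟨hu.unit, by simp only [IsUnit.unit_spec]; linear_combination -hp⟩
  exact (this.pow_pow.dvd_iff_dvd_left).symm

theorem X_pow_succ_dvd_pow_sub_X_pow {s : k⟦X⟧} (hs : X ^ 2 ∣ s - X) (N : ℕ) :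
    X ^ (N + 1) ∣ s ^ N - X ^ N := by
  obtain ⟨p, hp⟩ := hs
  have hs' : s = X * (1 + X * p) := by linear_combination hp
  obtain ⟨t, ht⟩ : X ∣ (1 + X * p) ^ N - 1 := by
    simpa using dvd_trans ⟨p, by ring⟩ (sub_dvd_pow_sub_pow (1 + X * p) 1 N)
  refine ⟨t, ?_⟩
  rw [hs', mul_pow]
  linear_combination X ^ N * ht

theorem exists_C_mul_pow_sub_dvd {s : k⟦X⟧} (hs : X ^ 2 ∣ s - X) {N : ℕ} {z : k⟦X⟧}
    (hz : s ^ N ∣ z) : ∃ e : k, s ^ (N + 1) ∣ z - C e * s ^ N := by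
  rw [pow_dvd_iff_X_pow_dvd hs] at hz
  obtain ⟨e, he⟩ := exists_C_mul_sub_dvd hz
  refine ⟨e, (pow_dvd_iff_X_pow_dvd hs _).2 ?_⟩
  convert dvd_sub he ((X_pow_succ_dvd_pow_sub_X_pow hs N).mul_left (C e)) using 1
  ring

/-- The obstruction for `g` to satisfy `A g = ζ g + x g ^ (r + 1) + w g ^ (2 * r + 1)`. -/
noncomputable def normalFormDefect (A : k⟦X⟧ →ₐ[k] k⟦X⟧) (ζ x w : k) (r : ℕ) (g : k⟦X⟧) : k⟦X⟧ :=
  A g - C ζ * g - C x * g ^ (r + 1) - C w * g ^ (2 * r + 1)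

theorem exists_normalFormDefect_dvd_succ [CharZero k] {A : k⟦X⟧ →ₐ[k] k⟦X⟧} {ζ x : k} {r : ℕ}
    (hr : 1 ≤ r) (hζ0 : ζ ≠ 0) (hζ : ζ ^ (r + 1) = ζ) (hx : x ≠ 0) {s : k⟦X⟧}
    (hs : X ^ 2 ∣ s - X) (hAs : s ^ (r + 2) ∣ A s - C ζ * s - C x * s ^ (r + 1)) (w : k) {d : ℕ}
    (hd : 2 ≤ d) (hdr : d ≠ r + 1) {g : k⟦X⟧} (hg : s ^ 2 ∣ g - s)
    (hE : s ^ (d + r) ∣ normalFormDefect A ζ x w r g) :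
    ∃ g', s ^ d ∣ g' - g ∧ s ^ (d + r + 1) ∣ normalFormDefect A ζ x w r g' := by
  obtain ⟨e, he⟩ := exists_C_mul_pow_sub_dvd hs hE
  by_cases hres : ζ ^ (d + r) = ζ
  · have hζr : ζ ^ r = 1 := mul_right_cancel₀ hζ0 (by rw [← pow_succ, hζ, one_mul])
    obtain ⟨m, rfl⟩ : ∃ m, d = m + 1 := ⟨d - 1, by omega⟩
    have hζm : ζ ^ m = 1 := by
      rw [pow_add, hζr, mul_one, pow_succ] at hres
      exact mul_right_cancel₀ hζ0 (by rw [hres, one_mul])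
    have hCm : (C ζ ^ m : k⟦X⟧) = 1 := by rw [← map_pow, hζm, map_one]
    have hne : x * ((r : k) - m) ≠ 0 :=
      mul_ne_zero hx (sub_ne_zero.2 (by norm_cast; omega))
    obtain ⟨c, hc⟩ : ∃ c : k, c * (x * ((r : k) - m)) = e := ⟨_, div_mul_cancel₀ e hne⟩
    have hc' : C c * (C x * ((r : k⟦X⟧) - m)) = C e := by
      rw [← hc]; simp
    refine ⟨g + C c * s ^ (m + 1), ⟨C c, by ring⟩, ?_⟩
    have h1 := (pow_succ_dvd_pow_sub_leading hr hAs m).mul_left (C c)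
    have h2 := (pow_succ_dvd_perturbed_pow_sub hg hd (C c) r).mul_left (C x)
    have h3 : s ^ (m + 1 + r + 1) ∣
        (g + C c * s ^ (m + 1)) ^ (2 * r + 1) - g ^ (2 * r + 1) := by
      have h4 := (pow_dvd_pow s (by omega : m + 1 + r + 1 ≤ m + 1 + 2 * r + 1)).trans
        (pow_succ_dvd_perturbed_pow_sub hg hd (C c) (2 * r))
      refine (dvd_sub_left ?_).1 h4
      exact (pow_dvd_pow s (by omega)).mul_left _
    convert dvd_sub (dvd_sub (dvd_add he h1) h2) (h3.mul_left (C w)) using 1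
    simp only [normalFormDefect, map_add, map_mul, map_pow, algHom_C, pow_succ (C ζ), hCm]
    linear_combination -s ^ (m + 1 + r) * hc'
  · obtain ⟨c, hc⟩ : ∃ c : k, c * (ζ - ζ ^ (d + r)) = e :=
      ⟨_, div_mul_cancel₀ e (sub_ne_zero.2 (Ne.symm hres))⟩
    have hc' : C c * (C ζ - C ζ ^ (d + r)) = (C e : k⟦X⟧) := by
      rw [← hc]; simp
    refine ⟨g + C c * s ^ (d + r), ⟨C c * s ^ r, by ring⟩, ?_⟩
    have h1 : s ^ (d + r + 1) ∣ A s ^ (d + r) - C ζ ^ (d + r) * s ^ (d + r) := by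
      obtain ⟨m, hm⟩ : ∃ m, d + r = m + 1 := ⟨d + r - 1, by omega⟩
      rw [hm]
      refine (dvd_sub_left ?_).1 ((pow_dvd_pow s (by omega : _ ≤ m + 1 + r + 1)).trans
        (pow_succ_dvd_pow_sub_leading hr hAs m))
      exact (pow_dvd_pow s (by omega)).mul_left _
    have h2 : ∀ m, 1 ≤ m → s ^ (d + r + 1) ∣
        (g + C c * s ^ (d + r)) ^ (m + 1) - g ^ (m + 1) := by
      intro m hm
      refine (dvd_sub_left ?_).1 ((pow_dvd_pow s (by omega)).trans
        (pow_succ_dvd_perturbed_pow_sub hg (by omega) (C c) m))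
      exact (pow_dvd_pow s (by omega)).mul_left _
    convert dvd_sub (dvd_sub (dvd_add he (h1.mul_left (C c))) ((h2 r hr).mul_left (C x)))
      ((h2 (2 * r) (by omega)).mul_left (C w)) using 1
    simp only [normalFormDefect, map_add, map_mul, map_pow, algHom_C]
    linear_combination -s ^ (d + r) * hc'

theorem exists_normalFormDefect_eq_zero [CharZero k] {A : k⟦X⟧ →ₐ[k] k⟦X⟧} (hX : X ∣ A X)
    {ζ x : k} {r : ℕ}
    (hr : 1 ≤ r) (hζ0 : ζ ≠ 0) (hζ : ζ ^ (r + 1) = ζ) (hx : x ≠ 0) {s : k⟦X⟧}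
    (hs : X ^ 2 ∣ s - X) (hAs : X ^ (r + 2) ∣ A s - C ζ * s - C x * s ^ (r + 1)) :
    ∃ (g : k⟦X⟧) (w : k), X ^ 2 ∣ g - X ∧ normalFormDefect A ζ x w r g = 0 := by
  rw [← pow_dvd_iff_X_pow_dvd hs] at hAs
  have trans2 : ∀ {d : ℕ} {g g' : k⟦X⟧}, 2 ≤ d → s ^ d ∣ g' - g → s ^ 2 ∣ g - s →
      s ^ 2 ∣ g' - s := by
    intro d g g' hd h1 h2
    have := dvd_add ((pow_dvd_pow s hd).trans h1) h2
    rwa [sub_add_sub_cancel] at this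
  have key : ∀ d, 2 ≤ d → d ≤ r + 1 →
      ∃ g, s ^ 2 ∣ g - s ∧ s ^ (d + r) ∣ normalFormDefect A ζ x 0 r g := by
    intro d hd
    induction d, hd using Nat.le_induction with
    | base =>
      refine fun _ => ⟨s, by simp, ?_⟩
      rw [add_comm]
      simpa [normalFormDefect] using hAs
    | succ d hd ih =>
      intro hle
      obtain ⟨g, hg, hEg⟩ := ih (by omega)
      obtain ⟨g', hg', hEg'⟩ :=
        exists_normalFormDefect_dvd_succ hr hζ0 hζ hx hs hAs 0 hd (by omega) hg hEg
      exact ⟨g', trans2 hd hg' hg, by convert hEg' using 2; omega⟩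
  obtain ⟨g₀, hg₀, hEg₀⟩ := key (r + 1) (by omega) le_rfl
  obtain ⟨w, hw⟩ := exists_C_mul_pow_sub_dvd hs hEg₀
  have hg₀X : X ^ 2 ∣ g₀ - X := by
    have := dvd_add ((pow_dvd_iff_X_pow_dvd hs 2).1 hg₀) hs
    rwa [sub_add_sub_cancel] at this
  have hw' : X ^ (r + 2 + r) ∣ normalFormDefect A ζ x w r g₀ := by
    rw [pow_dvd_iff_X_pow_dvd hs] at hw
    have h1 := X_pow_succ_dvd_pow_sub_X_pow hs (2 * r + 1)
    have h2 := X_pow_succ_dvd_pow_sub_X_pow hg₀X (2 * r + 1)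
    have h3 := (dvd_sub h2 h1).mul_left (C w)
    rw [show r + 1 + r + 1 = r + 2 + r by ring] at hw
    rw [show 2 * r + 1 + 1 = r + 2 + r by ring] at h3
    convert dvd_sub hw h3 using 1
    simp only [normalFormDefect, map_zero]
    ring
  obtain ⟨g, hg, hEg⟩ : ∃ g, X ^ (r + 2) ∣ g - g₀ ∧ normalFormDefect A ζ x w r g = 0 := by
    refine exists_eq_zero_of_successive_approximation (r := r) ?_ hw' ?_
    · intro N g g' h
      have h1 : X ^ N ∣ A g' - A g := by
        rw [← map_sub]; exact X_pow_dvd_map hX h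
      have h2 := h1.sub (h.mul_left (C ζ))
      have h3 := (h.trans (sub_dvd_pow_sub_pow g' g (r + 1))).mul_left (C x)
      have h4 := (h.trans (sub_dvd_pow_sub_pow g' g (2 * r + 1))).mul_left (C w)
      convert (h2.sub h3).sub h4 using 1
      simp only [normalFormDefect]
      ring
    · intro d hd g hg hEg
      have hg2 : s ^ 2 ∣ g - s := trans2 (d := r + 2) (by omega)
        ((pow_dvd_iff_X_pow_dvd hs _).2 hg) hg₀
      obtain ⟨g', h1, h2⟩ := exists_normalFormDefect_dvd_succ hr hζ0 hζ hx hs hAs w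
        (by omega : 2 ≤ d) (by omega) hg2 ((pow_dvd_iff_X_pow_dvd hs _).2 hEg)
      exact ⟨g', (pow_dvd_iff_X_pow_dvd hs _).1 h1, (pow_dvd_iff_X_pow_dvd hs _).1 h2⟩
  refine ⟨g, w, ?_, hEg⟩
  have := dvd_add ((pow_dvd_pow X (by omega)).trans hg) hg₀X
  rwa [sub_add_sub_cancel] at this

theorem exists_normal_form_powerSeries [CharZero k] {A : k⟦X⟧ →ₐ[k] k⟦X⟧} {ζ : k} {n i : ℕ}
    (hn : n ≠ 0) (hζ : ζ ^ n = 1) (hA : X ^ 2 ∣ A X - C ζ * X) (hi : i ≠ 0)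
    (h1 : X ^ i ∣ (A ^ n) X - X) (h2 : ¬ X ^ (i + 1) ∣ (A ^ n) X - X) :
    ∃ (g : k⟦X⟧) (x y : k), X ^ 2 ∣ g - X ∧
      A g = ζ • g + x • g ^ i + (x ^ 2 * y) • g ^ (2 * i - 1) := by
  obtain ⟨hi2, hres, s, x, hx, hs, hAs⟩ := exists_leading_term hn hζ hA hi h1 h2
  obtain ⟨r, rfl⟩ : ∃ r, i = r + 1 := ⟨i - 1, by omega⟩
  have hζ0 : ζ ≠ 0 := by
    rintro rfl
    simp [hn] at hζ
  have hX : X ∣ A X := by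
    obtain ⟨p, hp⟩ := hA
    exact ⟨C ζ + X * p, by linear_combination hp⟩
  have hAs' : X ^ (r + 2) ∣ A s - C ζ * s - C x * s ^ (r + 1) := by
    convert hAs.sub ((X_pow_succ_dvd_pow_sub_X_pow hs (r + 1)).mul_left (C x)) using 1
    ring
  obtain ⟨g, w, hg, hE⟩ :=
    exists_normalFormDefect_eq_zero hX (by omega) hζ0 hres hx hs hAs'
  refine ⟨g, x, w / x ^ 2, hg, ?_⟩
  rw [mul_div_cancel₀ _ (pow_ne_zero 2 hx), show 2 * (r + 1) - 1 = 2 * r + 1 by omega]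
  simp only [smul_eq_C_mul]
  simp only [normalFormDefect] at hE
  linear_combination hE

theorem algebraMap_laurentSeries_C (c : k) :
    algebraMap k⟦X⟧ (LaurentSeries k) (C c) = algebraMap k (LaurentSeries k) c := rfl

theorem laurentSeries_smul_eq (c : k) (z : LaurentSeries k) :
    c • z = algebraMap k (LaurentSeries k) c * z := by
  rw [← HahnSeries.C_mul_eq_smul, ← HahnSeries.ofPowerSeries_C]
  rfl

theorem exists_powerSeries_algEquiv {g : k⟦X⟧} (hg : X ^ 2 ∣ g - X) :
    ∃ f : k⟦X⟧ ≃ₐ[k] k⟦X⟧, f X = g := by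
  have hc (j : ℕ) (hj : j < 2) : coeff j g = coeff j (X : k⟦X⟧) := by
    have := X_pow_dvd_iff.1 hg j hj
    rwa [map_sub, sub_eq_zero] at this
  have h0 : constantCoeff g = 0 := by simpa using hc 0 (by norm_num)
  have h1 : IsUnit (coeff 1 g) := by simp [hc 1 (by norm_num)]
  have hs : HasSubst g := .of_constantCoeff_zero' h0
  have hs' : HasSubst (g.substInvOfIsUnit h1) := .substInvOfIsUnit g h1
  refine ⟨AlgEquiv.ofAlgHom (substAlgHom hs) (substAlgHom hs') ?_ ?_, ?_⟩
  · ext1 f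
    simp only [AlgHom.comp_apply, coe_substAlgHom, AlgHom.id_apply]
    rw [subst_comp_subst_apply hs' hs, subst_substInvOfIsUnit_left g h0 h1, X_subst]
  · ext1 f
    simp only [AlgHom.comp_apply, coe_substAlgHom, AlgHom.id_apply]
    rw [subst_comp_subst_apply hs hs', subst_substInvOfIsUnit_right g h0 h1, X_subst]
  · exact substAlgHom_X hs

theorem exists_laurentSeries_algEquiv {g : k⟦X⟧} (hg : X ^ 2 ∣ g - X) :
    ∃ f : LaurentSeries k ≃ₐ[k] LaurentSeries k,
      f (HahnSeries.single 1 1) = algebraMap k⟦X⟧ (LaurentSeries k) g := by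
  obtain ⟨f, rfl⟩ := exists_powerSeries_algEquiv hg
  let F : LaurentSeries k ≃+* LaurentSeries k :=
    IsFractionRing.ringEquivOfRingEquiv (f : k⟦X⟧ ≃+* k⟦X⟧)
  have hF (h : k⟦X⟧) : F (algebraMap k⟦X⟧ (LaurentSeries k) h) =
      algebraMap k⟦X⟧ (LaurentSeries k) (f h) :=
    IsFractionRing.ringEquivOfRingEquiv_algebraMap (f : k⟦X⟧ ≃+* k⟦X⟧) h
  refine ⟨AlgEquiv.ofRingEquiv (f := F) fun c => ?_, ?_⟩
  · rw [← algebraMap_laurentSeries_C, hF]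
    exact congrArg _ (f.commutes c)
  · rw [← hF]
    exact congrArg F HahnSeries.ofPowerSeries_X.symm

theorem exists_powerSeries_eq_of_order_nonneg {z : LaurentSeries k} (hz : 0 ≤ z.order) :
    ∃ h : k⟦X⟧, algebraMap k⟦X⟧ (LaurentSeries k) h = z := by
  obtain ⟨n, hn⟩ := Int.eq_ofNat_of_zero_le hz
  exact ⟨_, LaurentSeries.X_order_mul_powerSeriesPart hn.symm⟩

theorem order_one_add_of_order_neg {z : LaurentSeries k} (hz : z.order < 0) :
    (1 + z).order = z.order := by
  have hz0 : z ≠ 0 := by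
    rintro rfl
    simp at hz
  have h1 : ∀ j < 0, (1 + z).coeff j = z.coeff j := fun j hj => by
    simp [HahnSeries.coeff_one, hj.ne]
  have hne : (1 + z).coeff z.order ≠ 0 := by
    rwa [h1 _ hz, Ne, HahnSeries.coeff_order_eq_zero]
  refine le_antisymm (HahnSeries.order_le_of_coeff_ne_zero hne) ?_
  rw [HahnSeries.le_order_iff_forall (HahnSeries.ne_zero_of_coeff_ne_zero hne)]
  intro j hj
  rw [h1 j (hj.trans hz), HahnSeries.coeff_eq_zero_of_lt_order hj]

theorem exists_powerSeries_eq_map [CharZero k] {α : LaurentSeries k ≃ₐ[k] LaurentSeries k}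
    (hα : (α (HahnSeries.single 1 1)).order = 1) (h : k⟦X⟧) :
    ∃ h' : k⟦X⟧, algebraMap k⟦X⟧ (LaurentSeries k) h' = α (algebraMap k⟦X⟧ (LaurentSeries k) h) := by
  apply exists_powerSeries_eq_of_order_nonneg
  by_contra! hneg
  obtain ⟨u, hu⟩ := exists_sq_eq_one_add (f := X * h ^ 2) (Dvd.intro _ rfl)
  have h1 := congrArg (fun z => α (algebraMap k⟦X⟧ (LaurentSeries k) z)) hu
  have hT : algebraMap k⟦X⟧ (LaurentSeries k) X = HahnSeries.single 1 1 :=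
    HahnSeries.ofPowerSeries_X
  simp only [map_add, map_mul, map_pow, map_one, hT] at h1
  set z := α (algebraMap k⟦X⟧ (LaurentSeries k) h)
  set t := α (HahnSeries.single 1 1)
  have hz : z ≠ 0 := by
    intro hz
    simp [hz] at hneg
  have ht : t ≠ 0 := by
    intro ht
    simp [ht] at hα
  have ho : (t * z ^ 2).order = 1 + 2 * z.order := by
    rw [HahnSeries.order_mul ht (pow_ne_zero 2 hz), hα, HahnSeries.order_pow]
    simp
  have h2 := congrArg HahnSeries.order h1
  rw [HahnSeries.order_pow, order_one_add_of_order_neg (by omega), ho, nsmul_eq_mul] at h2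
  push_cast at h2
  omega

theorem exists_powerSeries_algHom [CharZero k] {α : LaurentSeries k ≃ₐ[k] LaurentSeries k}
    (hα : (α (HahnSeries.single 1 1)).order = 1) :
    ∃ A : k⟦X⟧ →ₐ[k] k⟦X⟧, ∀ h, algebraMap k⟦X⟧ (LaurentSeries k) (A h) =
      α (algebraMap k⟦X⟧ (LaurentSeries k) h) := by
  choose A hA using exists_powerSeries_eq_map hα
  have inj : Function.Injective (algebraMap k⟦X⟧ (LaurentSeries k)) :=
    HahnSeries.ofPowerSeries_injective
  refine ⟨{ toFun := A, map_one' := inj ?_, map_mul' := fun a b => inj ?_, map_zero' := inj ?_,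
            map_add' := fun a b => inj ?_, commutes' := fun c => inj ?_ }, hA⟩
  · rw [hA, map_one, map_one]
  · simp only [hA, map_mul]
  · rw [hA, map_zero, map_zero]
  · simp only [hA, map_add]
  · rw [hA]
    exact α.commutes c

end

/-- Let `k` be a field of characteristic zero and `α` a `k`-automorphism
of `K₁ = k((t₁))` with `α(t₁) = ζt₁ + higher order terms`, `ζ` a primitive `n`-th root
of unity and `αⁿ ≠ id`. Let `i = i_α = v(αⁿ(t₁) − t₁)`. Then `α` is conjugate in
`Aut_k(K₁)` to an automorphism `β` with `β(t₁) = ζ t₁ + x t₁^i + x²y t₁^(2i−1)`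
for some `x, y ∈ k`. -/
theorem conjugate_to_normal_form
    (k : Type*) [Field k] [CharZero k] (n : ℕ) (ζ : k) (hζ : IsPrimitiveRoot ζ n)
    (α : LaurentSeries k ≃ₐ[k] LaurentSeries k)
    (T : LaurentSeries k) (hT : T = HahnSeries.single 1 1)
    (hα0 : ∀ m : ℤ, m ≤ 0 → (α T).coeff m = 0)
    (hα1 : (α T).coeff 1 = ζ)
    (hn : α ^ n ≠ 1)
    (i : ℕ)
    (hi_lt : ∀ m : ℤ, m < (i : ℤ) → ((α ^ n) T - T).coeff m = 0)
    (hi_ne : ((α ^ n) T - T).coeff (i : ℤ) ≠ 0) :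
    ∃ (f β : LaurentSeries k ≃ₐ[k] LaurentSeries k) (x y : k),
      β T = ζ • T + x • T ^ i + (x ^ 2 * y) • T ^ (2 * i - 1) ∧
      ∀ z, α z = f (β (f.symm z)) := by
  have hn0 : n ≠ 0 := by
    rintro rfl
    simp at hn
  have hζ0 : ζ ≠ 0 := hζ.ne_zero hn0
  have hTX : algebraMap k⟦X⟧ (LaurentSeries k) X = T := by
    rw [hT]; exact HahnSeries.ofPowerSeries_X
  have hord : (α T).order = 1 := by
    have hne : (α T).coeff 1 ≠ 0 := by rwa [hα1]
    refine le_antisymm (HahnSeries.order_le_of_coeff_ne_zero hne) ?_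
    by_contra! hlt
    exact HahnSeries.ne_zero_of_coeff_ne_zero hne
      (HahnSeries.coeff_order_eq_zero.1 (hα0 _ (by omega)))
  obtain ⟨A, hA⟩ := exists_powerSeries_algHom (hT ▸ hord)
  have hAn : ∀ (j : ℕ) (h : k⟦X⟧), algebraMap k⟦X⟧ (LaurentSeries k) ((A ^ j) h) =
      (α ^ j) (algebraMap k⟦X⟧ (LaurentSeries k) h) := by
    intro j h
    induction j with
    | zero => simp
    | succ j ih =>
      rw [pow_succ' A, pow_succ' α, AlgHom.mul_apply, AlgEquiv.mul_apply, hA, ih]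
  have hcoeff : ∀ (h : k⟦X⟧) (j : ℕ),
      (algebraMap k⟦X⟧ (LaurentSeries k) h).coeff (j : ℤ) = coeff j h :=
    fun h j => HahnSeries.ofPowerSeries_apply_coeff h j
  have hsub : algebraMap k⟦X⟧ (LaurentSeries k) ((A ^ n) X - X) = (α ^ n) T - T := by
    rw [map_sub, hAn, hTX]
  have hAX : X ^ 2 ∣ A X - C ζ * X := by
    have hAc : ∀ j : ℕ, coeff j (A X) = (α T).coeff j := by
      intro j
      rw [← hcoeff, hA, hTX]
    rw [X_pow_dvd_iff]
    intro j hj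
    interval_cases j
    · simpa [hα0] using hAc 0
    · have := hAc 1
      rw [Nat.cast_one, hα1] at this
      simp [this]
  have hlt : ∀ j < i, coeff j ((A ^ n) X - X) = 0 := fun j hj => by
    rw [← hcoeff, hsub]
    exact hi_lt j (by exact_mod_cast hj)
  have hne : coeff i ((A ^ n) X - X) ≠ 0 := by rwa [← hcoeff, hsub]
  have hi0 : i ≠ 0 := by
    rintro rfl
    have hX : X ∣ A X := by
      obtain ⟨p, hp⟩ := hAX
      exact ⟨C ζ + X * p, by linear_combination hp⟩
    have hXn : ∀ j : ℕ, X ∣ (A ^ j) X := by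
      intro j
      induction j with
      | zero => simp
      | succ j ih =>
        rw [pow_succ' A, AlgHom.mul_apply]
        simpa using X_pow_dvd_map (N := 1) hX (by simpa using ih)
    exact hne (by simpa using X_dvd_iff.1 ((hXn n).sub dvd_rfl))
  obtain ⟨g, x, y, hg, hgA⟩ := exists_normal_form_powerSeries hn0 hζ.pow_eq_one hAX hi0
    (X_pow_dvd_iff.2 hlt) (fun h => hne (X_pow_dvd_iff.1 h i (by omega)))
  obtain ⟨f, hf⟩ := exists_laurentSeries_algEquiv hg
  rw [← hT] at hf
  refine ⟨f, (f.trans α).trans f.symm, x, y, ?_, fun z => by simp⟩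
  have key := congrArg (algebraMap k⟦X⟧ (LaurentSeries k)) hgA
  rw [hA] at key
  simp only [smul_eq_C_mul, map_add, map_mul, map_pow, ← hf, algebraMap_laurentSeries_C] at key
  simp only [AlgEquiv.trans_apply]
  rw [AlgEquiv.symm_apply_eq, key]
  simp only [laurentSeries_smul_eq, map_add, map_mul, map_pow, AlgEquiv.commutes]
end

section
/- In the algebra A = ℚ((u))⟨x,y⟩/⟨[x,[x,y]],[y,[x,y]]⟩, the function w defined by w(a) = k if a = f_k z^k + … + f_m z^m with f_k ≠ 0 (in the canonical form with z = [x,y] central), w(0) = ∞, is a discrete valuation: w(ab) = w(a) + w(b) and w(a+b) ≥ min(w(a), w(b)). In particular A has no nontrivial zero divisors. -/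
/-- The two defining relations `[x,[x,y]] = 0` and `[y,[x,y]] = 0` of Dubrovin's
algebra `A = ℚ((u))⟨x,y⟩ / ⟨[x,[x,y]], [y,[x,y]]⟩`. -/
inductive DubrovinRel :
    FreeAlgebra (LaurentSeries ℚ) (Fin 2) → FreeAlgebra (LaurentSeries ℚ) (Fin 2) → Prop
  | rel1 : DubrovinRel
      (FreeAlgebra.ι (LaurentSeries ℚ) 0 *
          (FreeAlgebra.ι (LaurentSeries ℚ) 0 * FreeAlgebra.ι (LaurentSeries ℚ) 1 -
            FreeAlgebra.ι (LaurentSeries ℚ) 1 * FreeAlgebra.ι (LaurentSeries ℚ) 0) -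
        (FreeAlgebra.ι (LaurentSeries ℚ) 0 * FreeAlgebra.ι (LaurentSeries ℚ) 1 -
            FreeAlgebra.ι (LaurentSeries ℚ) 1 * FreeAlgebra.ι (LaurentSeries ℚ) 0) *
          FreeAlgebra.ι (LaurentSeries ℚ) 0) 0
  | rel2 : DubrovinRel
      (FreeAlgebra.ι (LaurentSeries ℚ) 1 *
          (FreeAlgebra.ι (LaurentSeries ℚ) 0 * FreeAlgebra.ι (LaurentSeries ℚ) 1 -
            FreeAlgebra.ι (LaurentSeries ℚ) 1 * FreeAlgebra.ι (LaurentSeries ℚ) 0) -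
        (FreeAlgebra.ι (LaurentSeries ℚ) 0 * FreeAlgebra.ι (LaurentSeries ℚ) 1 -
            FreeAlgebra.ι (LaurentSeries ℚ) 1 * FreeAlgebra.ι (LaurentSeries ℚ) 0) *
          FreeAlgebra.ι (LaurentSeries ℚ) 1) 0

/-- Dubrovin's algebra `A = ℚ((u))⟨x,y⟩ / ⟨[x,[x,y]], [y,[x,y]]⟩`. -/
abbrev DubrovinAlgebra : Type := RingQuot DubrovinRel

noncomputable instance : Ring DubrovinAlgebra := RingQuot.instRing DubrovinRel
noncomputable instance : Algebra (LaurentSeries ℚ) DubrovinAlgebra :=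
  RingQuot.instAlgebra DubrovinRel

noncomputable def DubrovinX : DubrovinAlgebra :=
  RingQuot.mkAlgHom (LaurentSeries ℚ) DubrovinRel (FreeAlgebra.ι (LaurentSeries ℚ) 0)

noncomputable def DubrovinY : DubrovinAlgebra :=
  RingQuot.mkAlgHom (LaurentSeries ℚ) DubrovinRel (FreeAlgebra.ι (LaurentSeries ℚ) 1)

/-- `z = [x,y]` in Dubrovin's algebra. -/
noncomputable def DubrovinZ : DubrovinAlgebra :=
  DubrovinX * DubrovinY - DubrovinY * DubrovinX

/-- The normal-form polynomials in `x, y`: the `ℚ((u))`-span of the monomials `x^a y^b`. -/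
noncomputable def DubrovinPoly : Submodule (LaurentSeries ℚ) DubrovinAlgebra :=
  Submodule.span (LaurentSeries ℚ)
    {m : DubrovinAlgebra | ∃ a b : ℕ, m = DubrovinX ^ a * DubrovinY ^ b}

namespace Dubrovin

open MvPolynomial

/-- Commutative polynomials in `x, y, z`, recording the normal forms `∑ c x^a y^b z^j`. -/
abbrev NormalForm : Type := MvPolynomial (Fin 3) (LaurentSeries ℚ)

theorem commute_X_Z : Commute DubrovinX DubrovinZ := by
  have h := RingQuot.mkAlgHom_rel (LaurentSeries ℚ) DubrovinRel.rel1
  simp only [map_sub, map_mul, map_zero] at h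
  exact sub_eq_zero.mp h

theorem commute_Y_Z : Commute DubrovinY DubrovinZ := by
  have h := RingQuot.mkAlgHom_rel (LaurentSeries ℚ) DubrovinRel.rel2
  simp only [map_sub, map_mul, map_zero] at h
  exact sub_eq_zero.mp h

theorem induction_on {p : DubrovinAlgebra → Prop}
    (scalar : ∀ r : LaurentSeries ℚ, p (algebraMap _ _ r))
    (x : p DubrovinX) (y : p DubrovinY)
    (mul : ∀ a b, p a → p b → p (a * b)) (add : ∀ a b, p a → p b → p (a + b))
    (a : DubrovinAlgebra) : p a := by
  obtain ⟨f, rfl⟩ := RingQuot.mkAlgHom_surjective (LaurentSeries ℚ) DubrovinRel a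
  induction f using FreeAlgebra.induction with
  | grade0 r => rw [AlgHom.commutes]; exact scalar r
  | grade1 i => fin_cases i; exacts [x, y]
  | mul f g hf hg => rw [map_mul]; exact mul _ _ hf hg
  | add f g hf hg => rw [map_add]; exact add _ _ hf hg

/-- The operator by which `y` acts on normal forms: `Y - Z ∂/∂X`. -/
noncomputable def actY : Module.End (LaurentSeries ℚ) NormalForm :=
  LinearMap.mulLeft _ (X 1) - LinearMap.mulLeft _ (X 2) ∘ₗ (pderiv 0).toLinearMap

theorem actY_apply (p : NormalForm) : actY p = X 1 * p - X 2 * pderiv 0 p := rfl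

/-- The operators by which the generators act on normal forms. -/
noncomputable def actGen : Fin 2 → Module.End (LaurentSeries ℚ) NormalForm :=
  ![LinearMap.mulLeft _ (X 0), actY]

theorem actGen_commutator_apply (p : NormalForm) :
    (actGen 0 * actGen 1 - actGen 1 * actGen 0) p = X 2 * p := by
  simp [actGen, actY_apply, Derivation.leibniz]
  ring

/-- Left multiplication of `A` on normal forms. -/
noncomputable def act : DubrovinAlgebra →ₐ[LaurentSeries ℚ] Module.End (LaurentSeries ℚ) NormalForm :=
  RingQuot.liftAlgHom (LaurentSeries ℚ) ⟨FreeAlgebra.lift _ actGen, by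
    intro f g h
    have hp : actGen 0 * actGen 1 - actGen 1 * actGen 0 = LinearMap.mulLeft _ (X 2) :=
      LinearMap.ext actGen_commutator_apply
    cases h <;> refine LinearMap.ext fun p => ?_ <;>
      simp only [map_sub, map_mul, FreeAlgebra.lift_ι_apply, hp, map_zero]
    · simp [actGen]; ring
    · simp [actGen, actY_apply, Derivation.leibniz]
      ring⟩

theorem act_X (p : NormalForm) : act DubrovinX p = X 0 * p := by
  simp [act, DubrovinX, actGen]

theorem act_Y (p : NormalForm) : act DubrovinY p = X 1 * p - X 2 * pderiv 0 p := by
  simp [act, DubrovinY, actGen, actY_apply]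

theorem act_Z (p : NormalForm) : act DubrovinZ p = X 2 * p := by
  rw [DubrovinZ, map_sub, map_mul, map_mul, ← actGen_commutator_apply]
  simp [act, DubrovinX, DubrovinY]

theorem act_Z_pow (n : ℕ) (p : NormalForm) : act (DubrovinZ ^ n) p = X 2 ^ n * p := by
  induction n generalizing p with
  | zero => simp
  | succ n ih => rw [pow_succ, map_mul, Module.End.mul_apply, act_Z, ih]; ring

theorem act_X_pow (n : ℕ) (p : NormalForm) : act (DubrovinX ^ n) p = X 0 ^ n * p := by
  induction n generalizing p with
  | zero => simp
  | succ n ih => rw [pow_succ, map_mul, Module.End.mul_apply, act_X, ih]; ring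

theorem act_Y_pow (n : ℕ) {p : NormalForm} (hp : pderiv 0 p = 0) :
    act (DubrovinY ^ n) p = X 1 ^ n * p := by
  induction n with
  | zero => simp
  | succ n ih =>
    rw [pow_succ', map_mul, Module.End.mul_apply, ih, act_Y]
    simp [Derivation.leibniz, Derivation.leibniz_pow, hp]
    ring

/-- The normal form of an element of `A`. -/
noncomputable def normalForm : DubrovinAlgebra →ₗ[LaurentSeries ℚ] NormalForm :=
  (LinearMap.applyₗ (1 : NormalForm)) ∘ₗ act.toLinearMap

theorem normalForm_apply (a : DubrovinAlgebra) : normalForm a = act a 1 := rfl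

theorem normalForm_mul (a b : DubrovinAlgebra) :
    normalForm (a * b) = act a (normalForm b) := by
  simp [normalForm_apply]

/-- The element of `A` with a given normal form. -/
noncomputable def ofNormalForm : NormalForm →ₗ[LaurentSeries ℚ] DubrovinAlgebra :=
  (basisMonomials (Fin 3) (LaurentSeries ℚ)).constr (LaurentSeries ℚ)
    fun m => DubrovinX ^ m 0 * DubrovinY ^ m 1 * DubrovinZ ^ m 2

theorem ofNormalForm_monomial (m : Fin 3 →₀ ℕ) (r : LaurentSeries ℚ) :
    ofNormalForm (monomial m r) = r • (DubrovinX ^ m 0 * DubrovinY ^ m 1 * DubrovinZ ^ m 2) := by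
  have h : monomial m r = r • basisMonomials (Fin 3) (LaurentSeries ℚ) m := by
    simp [smul_monomial]
  rw [h, map_smul, ofNormalForm, Module.Basis.constr_basis]

theorem normalForm_monomial (a b c : ℕ) :
    normalForm (DubrovinX ^ a * DubrovinY ^ b * DubrovinZ ^ c) = X 0 ^ a * X 1 ^ b * X 2 ^ c := by
  have h : pderiv 0 (X 2 ^ c : NormalForm) = 0 := by
    simp [Derivation.leibniz_pow]
  rw [mul_assoc, normalForm_mul, normalForm_mul, normalForm_apply, act_Z_pow, mul_one,
    act_Y_pow b h, act_X_pow, mul_assoc]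

theorem normalForm_ofNormalForm (p : NormalForm) : normalForm (ofNormalForm p) = p := by
  induction p using MvPolynomial.induction_on' with
  | monomial m r =>
    rw [ofNormalForm_monomial, map_smul, normalForm_monomial, monomial_eq, smul_eq_C_mul,
      Finsupp.prod_fintype _ _ (by simp), Fin.prod_univ_three]
  | add p q hp hq => rw [map_add, map_add, hp, hq]

theorem Y_mul_X_pow (n : ℕ) : DubrovinY * DubrovinX ^ n =
    DubrovinX ^ n * DubrovinY - (n : DubrovinAlgebra) * (DubrovinX ^ (n - 1) * DubrovinZ) := by
  induction n with
  | zero => simp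
  | succ n ih =>
    have hYX : DubrovinY * DubrovinX = DubrovinX * DubrovinY - DubrovinZ := by
      rw [DubrovinZ]; abel
    have hn : (n : DubrovinAlgebra) * (DubrovinX ^ (n - 1) * DubrovinZ) * DubrovinX =
        (n : DubrovinAlgebra) * (DubrovinX ^ n * DubrovinZ) := by
      cases n with
      | zero => simp
      | succ n =>
        rw [mul_assoc, mul_assoc, ← commute_X_Z.eq, ← mul_assoc (DubrovinX ^ _), ← pow_succ]
        rfl
    rw [pow_succ, ← mul_assoc, ih, sub_mul, hn, mul_assoc, hYX, Nat.add_sub_cancel]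
    push_cast
    noncomm_ring

theorem ofNormalForm_X_mul (p : NormalForm) :
    ofNormalForm (X 0 * p) = DubrovinX * ofNormalForm p := by
  induction p using MvPolynomial.induction_on' with
  | monomial m r =>
    rw [X, monomial_mul, ofNormalForm_monomial, ofNormalForm_monomial, mul_smul_comm]
    simp [add_comm 1, pow_succ', mul_assoc]
  | add p q hp hq => rw [mul_add, map_add, map_add, hp, hq, mul_add]

theorem ofNormalForm_Z_mul (p : NormalForm) :
    ofNormalForm (X 2 * p) = DubrovinZ * ofNormalForm p := by
  induction p using MvPolynomial.induction_on' with
  | monomial m r =>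
    have h : Commute DubrovinZ (DubrovinX ^ m 0 * DubrovinY ^ m 1) :=
      (commute_X_Z.symm.pow_right _).mul_right (commute_Y_Z.symm.pow_right _)
    rw [X, monomial_mul, ofNormalForm_monomial, ofNormalForm_monomial, mul_smul_comm,
      ← mul_assoc, h.eq]
    simp [add_comm 1, pow_succ', mul_assoc]
  | add p q hp hq => rw [mul_add, map_add, map_add, hp, hq, mul_add]

theorem ofNormalForm_Z_pow_mul (n : ℕ) (p : NormalForm) :
    ofNormalForm (X 2 ^ n * p) = DubrovinZ ^ n * ofNormalForm p := by
  induction n with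
  | zero => simp
  | succ n ih => rw [pow_succ', mul_assoc, ofNormalForm_Z_mul, ih, pow_succ', mul_assoc]

theorem ofNormalForm_act_Y (p : NormalForm) :
    ofNormalForm (act DubrovinY p) = DubrovinY * ofNormalForm p := by
  induction p using MvPolynomial.induction_on' with
  | monomial m r =>
    rw [act_Y, pderiv_monomial, X, X, monomial_mul, monomial_mul, map_sub, ofNormalForm_monomial,
      ofNormalForm_monomial, ofNormalForm_monomial, mul_smul_comm, ← mul_assoc DubrovinY,
      ← mul_assoc DubrovinY, Y_mul_X_pow]
    have h := (commute_Y_Z.symm.pow_right (m 1)).eq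
    have hc : (r * (m 0 : LaurentSeries ℚ)) • (DubrovinX ^ (m 0 - 1) * DubrovinY ^ m 1 *
        DubrovinZ ^ (1 + m 2)) = r • ((m 0 : DubrovinAlgebra) * (DubrovinX ^ (m 0 - 1) * DubrovinZ) *
          DubrovinY ^ m 1 * DubrovinZ ^ m 2) := by
      rw [mul_smul, add_comm 1, pow_succ']
      simp only [mul_assoc]
      rw [← mul_assoc DubrovinZ, h, Nat.cast_smul_eq_nsmul, nsmul_eq_mul]
      simp only [mul_assoc]
    simp only [sub_mul, smul_sub, one_mul]
    rw [← hc]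
    simp [add_comm 1, pow_succ', mul_assoc]
  | add p q hp hq => rw [map_add, map_add, map_add, hp, hq, mul_add]

theorem ofNormalForm_act (a : DubrovinAlgebra) (p : NormalForm) :
    ofNormalForm (act a p) = a * ofNormalForm p := by
  induction a using induction_on generalizing p with
  | scalar r =>
    rw [AlgHom.commutes, Module.algebraMap_end_apply, map_smul, Algebra.smul_def]
  | x => rw [act_X, ofNormalForm_X_mul]
  | y => exact ofNormalForm_act_Y p
  | mul a b ha hb => rw [map_mul, Module.End.mul_apply, ha, hb, mul_assoc]
  | add a b ha hb => rw [map_add, LinearMap.add_apply, map_add, ha, hb, add_mul]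

theorem ofNormalForm_normalForm (a : DubrovinAlgebra) : ofNormalForm (normalForm a) = a := by
  have h : ofNormalForm 1 = 1 := by
    rw [← C_1, C_apply, ofNormalForm_monomial]
    simp
  rw [normalForm_apply, ofNormalForm_act, h, mul_one]

theorem normalForm_injective : Function.Injective normalForm :=
  Function.LeftInverse.injective ofNormalForm_normalForm

/-- Reduction of normal forms modulo `z`. -/
noncomputable def modZ : NormalForm →ₐ[LaurentSeries ℚ] NormalForm :=
  aeval ![X 0, X 1, 0]

theorem modZ_eq_zero_iff (p : NormalForm) : modZ p = 0 ↔ X 2 ∣ p := by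
  constructor
  · intro h
    suffices X 2 ∣ p - modZ p by simpa [h] using this
    clear h
    induction p using MvPolynomial.induction_on with
    | C r => simp [modZ]
    | add p q hp hq =>
      rw [map_add, add_sub_add_comm]
      exact dvd_add hp hq
    | mul_X p i hp =>
      have hi : (X 2 : NormalForm) ∣ X i - modZ (X i) := by
        fin_cases i <;> simp [modZ]
      have e : p * X i - modZ (p * X i) =
          (p - modZ p) * X i + modZ p * (X i - modZ (X i)) := by
        rw [map_mul]; ring
      rw [e]
      exact dvd_add (hp.mul_right _) (hi.mul_left _)
  · rintro ⟨q, rfl⟩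
    simp [modZ]

theorem modZ_act (a : DubrovinAlgebra) (p : NormalForm) :
    modZ (act a p) = modZ (normalForm a) * modZ p := by
  induction a using induction_on generalizing p with
  | scalar r =>
    simp [normalForm_apply, AlgHom.commutes, Module.algebraMap_end_apply]
  | x => simp [normalForm_apply, act_X]
  | y => simp [normalForm_apply, act_Y, modZ]
  | mul a b ha hb =>
    rw [normalForm_mul, ha, map_mul, Module.End.mul_apply, ha, hb, mul_assoc]
  | add a b ha hb => rw [map_add, LinearMap.add_apply, map_add, ha, hb, map_add, map_add, add_mul]

theorem modZ_normalForm_of_mem {f : DubrovinAlgebra} (hf : f ∈ DubrovinPoly) :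
    modZ (normalForm f) = normalForm f := by
  induction hf using Submodule.span_induction with
  | mem f hf =>
    obtain ⟨a, b, rfl⟩ := hf
    have h := normalForm_monomial a b 0
    rw [pow_zero, pow_zero, mul_one, mul_one] at h
    simp [h, modZ]
  | zero => simp
  | add f g _ _ hf hg => rw [map_add, map_add, hf, hg]
  | smul r f _ hf => rw [map_smul, map_smul, hf]

theorem commute_Z (a : DubrovinAlgebra) : Commute DubrovinZ a := by
  induction a using induction_on with
  | scalar r => exact (Algebra.commutes r _).symm
  | x => exact commute_X_Z.symm
  | y => exact commute_Y_Z.symm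
  | mul a b ha hb => exact ha.mul_right hb
  | add a b ha hb => exact ha.add_right hb

theorem normalForm_Z_pow_mul (n : ℕ) (a : DubrovinAlgebra) :
    normalForm (DubrovinZ ^ n * a) = X 2 ^ n * normalForm a := by
  rw [normalForm_mul, act_Z_pow]

/-- The `z`-adic valuation on `A`, read off the normal form. -/
noncomputable def val (a : DubrovinAlgebra) : ℕ∞ :=
  emultiplicity (X 2) (normalForm a)

theorem val_zero : val 0 = ⊤ := by simp [val]

theorem val_Z_pow_mul (n : ℕ) {a : DubrovinAlgebra} (ha : modZ (normalForm a) ≠ 0) :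
    val (DubrovinZ ^ n * a) = n := by
  rw [val, normalForm_Z_pow_mul, emultiplicity_eq_coe]
  refine ⟨dvd_mul_right _ _, fun h => ha ?_⟩
  rw [pow_succ, mul_dvd_mul_iff_left (pow_ne_zero _ (X_ne_zero _))] at h
  exact (modZ_eq_zero_iff _).mpr h

theorem exists_eq_Z_pow_mul {a : DubrovinAlgebra} (ha : a ≠ 0) :
    ∃ (n : ℕ) (b : DubrovinAlgebra), modZ (normalForm b) ≠ 0 ∧ a = DubrovinZ ^ n * b := by
  have h0 : normalForm a ≠ 0 := (map_ne_zero_iff _ normalForm_injective).mpr ha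
  obtain ⟨n, p, hp, h⟩ := WfDvdMonoid.max_power_factor h0
    (X_prime (R := LaurentSeries ℚ) (i := (2 : Fin 3))).irreducible
  refine ⟨n, ofNormalForm p, ?_, ?_⟩
  · rwa [normalForm_ofNormalForm, Ne, modZ_eq_zero_iff]
  · rw [← ofNormalForm_Z_pow_mul, ← h, ofNormalForm_normalForm]

theorem val_mul (a b : DubrovinAlgebra) : val (a * b) = val a + val b := by
  rcases eq_or_ne a 0 with rfl | ha
  · simp [val_zero]
  rcases eq_or_ne b 0 with rfl | hb
  · simp [val_zero]
  obtain ⟨m, a, ha', rfl⟩ := exists_eq_Z_pow_mul ha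
  obtain ⟨n, b, hb', rfl⟩ := exists_eq_Z_pow_mul hb
  have hab : modZ (normalForm (a * b)) ≠ 0 := by
    rw [normalForm_mul, modZ_act]
    exact mul_ne_zero ha' hb'
  have e : DubrovinZ ^ m * a * (DubrovinZ ^ n * b) = DubrovinZ ^ (m + n) * (a * b) := by
    rw [pow_add, mul_assoc, ← mul_assoc a, ← ((commute_Z a).pow_left n).eq]
    simp only [mul_assoc]
  rw [e, val_Z_pow_mul _ hab, val_Z_pow_mul _ ha', val_Z_pow_mul _ hb', Nat.cast_add]

theorem min_val_le_val_add (a b : DubrovinAlgebra) : min (val a) (val b) ≤ val (a + b) := by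
  simp only [val, map_add]
  exact min_le_emultiplicity_add

theorem val_eq_top_iff (a : DubrovinAlgebra) : val a = ⊤ ↔ a = 0 := by
  refine ⟨fun h => ?_, fun h => h ▸ val_zero⟩
  by_contra ha
  obtain ⟨n, b, hb, rfl⟩ := exists_eq_Z_pow_mul ha
  rw [val_Z_pow_mul _ hb] at h
  exact ENat.natCast_ne_top n h

theorem val_sum_eq (g : ℕ →₀ DubrovinAlgebra) (hg : ∀ j, g j ∈ DubrovinPoly) {k : ℕ}
    (hk : g k ≠ 0) (hlt : ∀ j < k, g j = 0) :
    val (g.sum fun j c => c * DubrovinZ ^ j) = k := by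
  have hdvd : ∀ j ∈ g.support.erase k, DubrovinZ ^ (k + 1) ∣ g j * DubrovinZ ^ j := by
    intro j hj
    rw [Finset.mem_erase, Finsupp.mem_support_iff] at hj
    have hkj : k < j := lt_of_le_of_ne (not_lt.mp fun h => hj.2 (hlt j h)) hj.1.symm
    rw [← ((commute_Z (g j)).pow_left j).eq]
    exact (pow_dvd_pow _ hkj).mul_right _
  obtain ⟨b, hb⟩ := Finset.dvd_sum hdvd
  have hsum : (g.sum fun j c => c * DubrovinZ ^ j) = DubrovinZ ^ k * (g k + DubrovinZ * b) := by
    rw [Finsupp.sum, ← Finset.add_sum_erase _ _ (Finsupp.mem_support_iff.mpr hk), hb,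
      ← ((commute_Z (g k)).pow_left k).eq, pow_succ, mul_add, mul_assoc]
  rw [hsum]
  apply val_Z_pow_mul
  rw [map_add, map_add, normalForm_mul DubrovinZ, act_Z, (modZ_eq_zero_iff _).mpr (dvd_mul_right _ _),
    add_zero, modZ_normalForm_of_mem (hg k)]
  exact (map_ne_zero_iff _ normalForm_injective).mpr hk

end Dubrovin

/-- On `A = ℚ((u))⟨x,y⟩/⟨[x,[x,y]],[y,[x,y]]⟩` the function `w`
given on the canonical form `a = f_k z^k + … + f_m z^m` (`f_k ≠ 0`) by `w(a) = k`,
`w(0) = ∞`, is a discrete valuation: `w(ab) = w(a) + w(b)` and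
`w(a+b) ≥ min(w(a), w(b))`. In particular `A` has no nontrivial zero divisors. -/
theorem dubrovin_valuation_exists :
    ∃ w : DubrovinAlgebra → WithTop ℕ,
      w 0 = ⊤ ∧
      (∀ (a : DubrovinAlgebra) (g : ℕ →₀ DubrovinAlgebra),
        (∀ j, g j ∈ DubrovinPoly) →
        a = g.sum (fun j c => c * DubrovinZ ^ j) →
        ∀ k : ℕ, g k ≠ 0 → (∀ j < k, g j = 0) → w a = (k : WithTop ℕ)) ∧
      (∀ a b : DubrovinAlgebra, w (a * b) = w a + w b) ∧
      (∀ a b : DubrovinAlgebra, min (w a) (w b) ≤ w (a + b)) ∧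
      (∀ a b : DubrovinAlgebra, a * b = 0 → a = 0 ∨ b = 0) := by
  refine ⟨Dubrovin.val, Dubrovin.val_zero, ?_, Dubrovin.val_mul, Dubrovin.min_val_le_val_add, ?_⟩
  · rintro a g hg rfl k hk hlt
    exact Dubrovin.val_sum_eq g hg hk hlt
  · intro a b h
    rw [← Dubrovin.val_eq_top_iff, Dubrovin.val_mul, ENat.add_eq_top] at h
    simpa only [Dubrovin.val_eq_top_iff] using h
end
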